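/- arXiv:1409.3865 — 2 statements merged into one kernel-verified Lean document; each statement's English description precedes it below -/
import Mathlib

section
/- An infinite binary sequence ω is Martin-Löf random with respect to the uniform Bernoulli measure if and only if it passes every Solovay test of randomness, i.e., for every computable sequence of binary strings (x_n) with ∑_n 2^{-|x_n|} < ∞, only finitely many x_n are prefixes of ω. -/
open MeasureTheory Filter

/-- The cylinder set determined by a finite binary string. -/
def Cyl (x : List Bool) : Set (ℕ → Bool) :=
  {ω | ∀ i : Fin x.length, ω i = x.get i}

/-- The length-`n` prefix of an infinite binary sequence. -/
def Pre (ω : ℕ → Bool) (n : ℕ) : List Bool := (List.range n).map ω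

/-- `x` is a prefix of the infinite sequence `ω`. -/
def PrefixOf (x : List Bool) (ω : ℕ → Bool) : Prop :=
  ∀ i : Fin x.length, ω i = x.get i

/-- `μ` is the uniform Bernoulli measure `B_{1/2}` on Cantor space. -/
def UniformMeasure (μ : Measure (ℕ → Bool)) : Prop :=
  ∀ x : List Bool, μ (Cyl x) = (2 : ENNReal)⁻¹ ^ x.length

/-- A Solovay test: a computable sequence of strings whose weights form a convergent series. -/
def SolovayTest (x : ℕ → List Bool) : Prop :=
  Computable x ∧ Summable (fun n => (2 : ℝ) ^ (-((x n).length : ℤ)))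

/-- `ω` passes the Solovay test `x`: only finitely many `x n` are prefixes of `ω`. -/
def PassesSolovay (x : ℕ → List Bool) (ω : ℕ → Bool) : Prop :=
  {n | PrefixOf (x n) ω}.Finite

/-- A total Solovay test: the series converges with a computable rate of convergence. -/
def TotalSolovayTest (x : ℕ → List Bool) : Prop :=
  SolovayTest x ∧ ∃ m : ℚ → ℕ, Computable m ∧
    ∀ δ : ℚ, 0 < δ → ∑' n : {n : ℕ // m δ ≤ n}, (2 : ℝ) ^ (-((x n.1).length : ℤ)) ≤ (δ : ℝ)

/-- The effectively open set enumerated by the `n`-th row of `f`. -/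
def EffOpen (f : ℕ → ℕ → List Bool) (n : ℕ) : Set (ℕ → Bool) := ⋃ i, Cyl (f n i)

/-- A Martin-Löf test with respect to `μ`. -/
def MLTest (μ : Measure (ℕ → Bool)) (f : ℕ → ℕ → List Bool) : Prop :=
  Computable₂ f ∧ ∀ n, μ (EffOpen f n) ≤ (2 : ENNReal)⁻¹ ^ n

/-- A Schnorr test: a Martin-Löf test whose measures are uniformly computable reals. -/
def SchnorrTest (μ : Measure (ℕ → Bool)) (f : ℕ → ℕ → List Bool) : Prop :=
  MLTest μ f ∧ ∃ g : ℕ → ℚ → ℚ, Computable₂ g ∧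
    ∀ (n : ℕ) (ε : ℚ), 0 < ε → |(g n ε : ℝ) - (μ (EffOpen f n)).toReal| ≤ (ε : ℝ)

/-- Martin-Löf randomness with respect to `μ`. -/
def MLRandom (μ : Measure (ℕ → Bool)) (ω : ℕ → Bool) : Prop :=
  ∀ f, MLTest μ f → ∃ n, ω ∉ EffOpen f n

/-- Schnorr randomness with respect to `μ`. -/
def SchnorrRandom (μ : Measure (ℕ → Bool)) (ω : ℕ → Bool) : Prop :=
  ∀ f, SchnorrTest μ f → ∃ n, ω ∉ EffOpen f n

/-- A monotone machine: a partial computable monotone map on binary strings. -/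
def MonotoneMachine (ψ : List Bool →. List Bool) : Prop :=
  Partrec ψ ∧ ∀ p p' y y', y ∈ ψ p → y' ∈ ψ p' → p <+: p' → (y <+: y' ∨ y' <+: y)

/-- `Km` is the monotone Kolmogorov complexity determined by some optimal monotone machine. -/
def IsKm (Km : List Bool → ℕ) : Prop :=
  ∃ ψ : List Bool →. List Bool, MonotoneMachine ψ ∧
    (∀ x : List Bool, ∃ p y, y ∈ ψ p ∧ x <+: y ∧ p.length = Km x) ∧
    (∀ x p y, y ∈ ψ p → x <+: y → Km x ≤ p.length) ∧
    (∀ ψ' : List Bool →. List Bool, MonotoneMachine ψ' →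
      ∃ c : ℕ, ∀ x p y, y ∈ ψ' p → x <+: y → Km x ≤ p.length + c)

/-- A computable real-valued function on Cantor space. -/
def ComputableRealFn (f : (ℕ → Bool) → ℝ) : Prop :=
  ∃ F : List Bool → ℚ → ℚ, ∃ k : ℚ → ℕ, Computable₂ F ∧ Computable k ∧
    ∀ (ω : ℕ → Bool) (ε : ℚ), 0 < ε → |(F (Pre ω (k ε)) ε : ℝ) - f ω| ≤ (ε : ℝ)

/-- A computable transformation of Cantor space, induced by a monotone machine. -/
def ComputableTrans (T : (ℕ → Bool) → (ℕ → Bool)) : Prop :=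
  ∃ ψ : List Bool →. List Bool, MonotoneMachine ψ ∧
    ∀ ω : ℕ → Bool, (∀ n y, y ∈ ψ (Pre ω n) → y = Pre (T ω) y.length) ∧
      (∀ k, ∃ n y, y ∈ ψ (Pre ω n) ∧ k ≤ y.length)

/-!
Counting how many of `x 0, …, x (|z| - 1)` are prefixes of a string `z` turns a list of strings `x`
into a computable function of `z` that increases along prefixes. If the weights of `x` sum to at
most `2 ^ c`, then by Markov's inequality the sequences extending some `z` with count at least
`2 ^ (n + c)` have measure at most `2⁻ⁿ`, so these strings form a Martin-Löf test; it is failed by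
every sequence with infinitely many prefixes among the `x k`.

Conversely, given a Martin-Löf test, the strings at which the count for row `n` first becomes
nonzero are prefix-free and generate the same open set as the row. Their total weight is thus the
measure of that open set, at most `2⁻ⁿ`, and summing over `n` yields a Solovay test.
-/

section Computability

variable {α : Type*} [Primcodable α]

theorem primrecRel_prefix : PrimrecRel fun l₁ l₂ : List α ↦ l₁ <+: l₂ :=
  (Primrec.eq.comp Primrec.fst
    (Primrec.list_take.comp (Primrec.list_length.comp Primrec.fst) Primrec.snd)).of_eq
      fun _ ↦ List.prefix_iff_eq_take.symm

theorem primrec_list_replicate (a : α) : Primrec fun n : ℕ ↦ List.replicate n a :=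
  (Primrec.list_map Primrec.list_range (Primrec.const a).to₂).of_eq fun n ↦ by simp

theorem primrec_list_dropLast : Primrec (List.dropLast : List α → List α) :=
  (Primrec.list_take.comp (Primrec.pred.comp Primrec.list_length) Primrec.id).of_eq
    fun _ ↦ List.dropLast_eq_take.symm

theorem primrec₂_nat_pow : Primrec₂ ((· ^ ·) : ℕ → ℕ → ℕ) :=
  Primrec₂.unpaired'.1 Nat.Primrec.pow

theorem computable_nat_count {p : α → ℕ → Prop} [∀ a, DecidablePred (p a)] {b : α → ℕ}
    (hp : Computable₂ fun a k ↦ decide (p a k)) (hb : Computable b) :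
    Computable fun a ↦ Nat.count (p a) (b a) := by
  have hstep : Computable₂ fun a (q : ℕ × ℕ) ↦ q.2 + cond (decide (p a q.1)) 1 0 :=
    Primrec.nat_add.to_comp.comp (Computable.snd.comp Computable.snd)
      (Computable.cond (hp.comp Computable.fst (Computable.fst.comp Computable.snd))
        (Computable.const 1) (Computable.const 0))
  refine (Computable.nat_rec hb (Computable.const 0) hstep).of_eq fun a ↦ ?_
  induction b a with
  | zero => simp
  | succ n ih => rw [Nat.count_succ, ← ih, ← Bool.cond_decide]

end Computability

section PaddedEnum

variable {α β : Type*} {s : α → List Bool}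

/-- Enumerates the strings `s a` with `p a`, indexed by the codes of the `a`. At the indices `m`
which are not such a code, the value is `k` zeros: the enumeration has to be total, and the caller
chooses `k` to make the weight of the padding negligible. -/
def paddedEnum [Encodable α] (p : α → Prop) [DecidablePred p] (s : α → List Bool)
    (k m : ℕ) : List Bool :=
  ((Encodable.decode₂ α m).filter (p ·)).elim (List.replicate k false) s

theorem paddedEnum_encode [Encodable α] {p : α → Prop} [DecidablePred p] (k : ℕ) {a : α}
    (ha : p a) : paddedEnum p s k (Encodable.encode a) = s a := by
  simp [paddedEnum, Option.filter, ha]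

theorem paddedEnum_of_forall_encode_ne [Encodable α] {p : α → Prop} [DecidablePred p] (k : ℕ)
    {m : ℕ} (hm : ∀ a, p a → Encodable.encode a ≠ m) :
    paddedEnum p s k m = List.replicate k false := by
  have hnone : (Encodable.decode₂ α m).filter (p ·) = none := by
    simpa [Option.filter_eq_none_iff, Encodable.decode₂_eq_some] using
      fun a ham hpa ↦ hm a hpa ham
  simp [paddedEnum, hnone]

theorem computable_paddedEnum [Primcodable α] [Primcodable β] {p : β → α → Prop}
    [∀ b, DecidablePred (p b)] {k m : β → ℕ}
    (hp : Computable₂ fun b a ↦ decide (p b a)) (hs : Computable s) (hk : Computable k)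
    (hm : Computable m) : Computable fun b ↦ paddedEnum (p b) s (k b) (m b) := by
  have hpad : Computable fun b ↦ List.replicate (k b) false :=
    (primrec_list_replicate false).to_comp.comp hk
  have hcode : Computable₂ fun b a ↦ cond (decide (p b a)) (s a) (List.replicate (k b) false) :=
    Computable.cond hp (hs.comp Computable.snd) (hpad.comp Computable.fst)
  refine (Computable.option_casesOn (Primrec.decode₂.to_comp.comp hm) hpad hcode).of_eq fun b ↦ ?_
  unfold paddedEnum
  cases Encodable.decode₂ α (m b) with
  | none => rfl
  | some a => by_cases ha : p b a <;> simp [Option.filter, ha]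

end PaddedEnum

section Prefixes

variable {ω : ℕ → Bool} {x z : List Bool}

theorem prefixOf_iff_eq_pre : PrefixOf x ω ↔ x = Pre ω x.length := by
  simp [PrefixOf, Pre, List.ext_getElem_iff, Fin.forall_iff, eq_comm]

theorem length_pre (ω : ℕ → Bool) (n : ℕ) : (Pre ω n).length = n := by simp [Pre]

theorem prefixOf_pre (ω : ℕ → Bool) (n : ℕ) : PrefixOf (Pre ω n) ω := by
  rw [prefixOf_iff_eq_pre, length_pre]

theorem take_pre (ω : ℕ → Bool) (m n : ℕ) : (Pre ω n).take m = Pre ω (min m n) := by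
  rw [Pre, ← List.map_take, List.take_range, Pre]

theorem PrefixOf.mono (hz : PrefixOf z ω) (hxz : x <+: z) : PrefixOf x ω := by
  rw [prefixOf_iff_eq_pre] at hz ⊢
  conv_lhs => rw [List.prefix_iff_eq_take.1 hxz, hz, take_pre, min_eq_left hxz.length_le]

theorem PrefixOf.prefix_of_length_le (hx : PrefixOf x ω) (hz : PrefixOf z ω)
    (hle : x.length ≤ z.length) : x <+: z := by
  rw [prefixOf_iff_eq_pre] at hx hz
  rw [List.prefix_iff_eq_take, hz, take_pre, min_eq_left hle, ← hx]

theorem measurableSet_cyl (x : List Bool) : MeasurableSet (Cyl x) := by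
  simp only [Cyl, Set.ofPred_forall]
  exact .iInter fun i ↦ measurable_pi_apply _ (measurableSet_singleton _)

end Prefixes

section Counting

/-- The number of `k < |z|` such that `x k` is a prefix of `z`. Bounding `k` by `|z|` makes this
computable, and loses nothing when `z` runs through the prefixes of an infinite sequence. -/
def numPrefixes (x : ℕ → List Bool) (z : List Bool) : ℕ := Nat.count (fun k ↦ x k <+: z) z.length

variable {x : ℕ → List Bool} {z w : List Bool} {ω : ℕ → Bool}

theorem computable_numPrefixes {α : Type*} [Primcodable α] {f : α → ℕ → List Bool}
    {z : α → List Bool} (hf : Computable₂ f) (hz : Computable z) :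
    Computable fun a ↦ numPrefixes (f a) (z a) :=
  computable_nat_count (primrecRel_prefix.decide.to_comp.comp hf (hz.comp Computable.fst))
    (Computable.list_length.comp hz)

theorem numPrefixes_mono (hzw : z <+: w) : numPrefixes x z ≤ numPrefixes x w :=
  (Nat.count_mono_left fun _ _ hk ↦ hk.trans hzw).trans (Nat.count_monotone _ hzw.length_le)

theorem exists_prefixOf_of_numPrefixes_ne_zero (hz : PrefixOf z ω) (h : numPrefixes x z ≠ 0) :
    ∃ k, PrefixOf (x k) ω := by
  obtain ⟨k, -, hk⟩ := Nat.count_ne_iff_exists.1 h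
  exact ⟨k, hz.mono hk⟩

theorem numPrefixes_le_tsum_indicator (hz : PrefixOf z ω) :
    (numPrefixes x z : ENNReal) ≤ ∑' k, (Cyl (x k)).indicator 1 ω := by
  rw [numPrefixes, Nat.count_eq_card_filter_range, Finset.card_eq_sum_ones, Nat.cast_sum]
  refine (Finset.sum_le_sum fun k hk ↦ ?_).trans (ENNReal.sum_le_tsum _)
  have hω : ω ∈ Cyl (x k) := hz.mono (Finset.mem_filter.1 hk).2
  simp [hω]

theorem exists_card_le_numPrefixes_pre (t : Finset ℕ) (ht : ∀ k ∈ t, PrefixOf (x k) ω) :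
    ∃ n, t.card ≤ numPrefixes x (Pre ω n) := by
  refine ⟨t.sup fun k ↦ max (k + 1) (x k).length, ?_⟩
  rw [numPrefixes, Nat.count_eq_card_filter_range, length_pre]
  refine Finset.card_le_card fun k hk ↦ ?_
  have hle := Finset.le_sup (f := fun k ↦ max (k + 1) (x k).length) hk
  rw [max_le_iff] at hle
  refine Finset.mem_filter.2 ⟨Finset.mem_range.2 hle.1, ?_⟩
  exact (ht k hk).prefix_of_length_le (prefixOf_pre ω _) (hle.2.trans_eq (length_pre ω _).symm)

/-- `z` is a minimal string with a nonzero count of prefixes among the `x k`. These strings form a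
prefix-free generating set of the open set `⋃ k, Cyl (x k)`, decidable from `x`. -/
def FirstHit (x : ℕ → List Bool) (z : List Bool) : Prop :=
  numPrefixes x z ≠ 0 ∧ numPrefixes x z.dropLast = 0

theorem computablePred_firstHit {α : Type*} [Primcodable α] {f : α → ℕ → List Bool}
    {z : α → List Bool} (hf : Computable₂ f) (hz : Computable z) :
    ComputablePred fun a ↦ FirstHit (f a) (z a) := by
  classical
  have hpair : Computable fun a ↦ (numPrefixes (f a) (z a), numPrefixes (f a) (z a).dropLast) :=
    (computable_numPrefixes hf hz).pair
      (computable_numPrefixes hf (primrec_list_dropLast.to_comp.comp hz))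
  have hiff : PrimrecPred fun q : ℕ × ℕ ↦ q.1 ≠ 0 ∧ q.2 = 0 :=
    (Primrec.eq.comp Primrec.fst (Primrec.const 0)).not.and
      (Primrec.eq.comp Primrec.snd (Primrec.const 0))
  exact (hiff.decide.to_comp.comp hpair).computablePred

theorem FirstHit.eq_of_prefix (hz : FirstHit x z) (hw : FirstHit x w) (hzw : z <+: w) : z = w := by
  by_contra hne
  have hlt : z.length < w.length :=
    hzw.length_le.lt_of_ne fun h ↦ hne (hzw.eq_of_length h)
  have hdrop : z <+: w.dropLast := by
    rw [List.dropLast_eq_take, List.prefix_take_iff]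
    exact ⟨hzw, Nat.le_pred_of_lt hlt⟩
  exact hz.1 (Nat.le_zero.1 ((numPrefixes_mono hdrop).trans_eq hw.2))

theorem FirstHit.eq_of_prefixOf (hz : FirstHit x z) (hw : FirstHit x w) (hzω : PrefixOf z ω)
    (hwω : PrefixOf w ω) : z = w := by
  rcases le_total z.length w.length with hle | hle
  · exact hz.eq_of_prefix hw (hzω.prefix_of_length_le hwω hle)
  · exact (hw.eq_of_prefix hz (hwω.prefix_of_length_le hzω hle)).symm

theorem exists_firstHit_prefixOf {k : ℕ} (hk : PrefixOf (x k) ω) :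
    ∃ z, FirstHit x z ∧ PrefixOf z ω := by
  classical
  have hex : ∃ n, numPrefixes x (Pre ω n) ≠ 0 := by
    obtain ⟨n, hn⟩ := exists_card_le_numPrefixes_pre {k} (by simpa using hk)
    exact ⟨n, Nat.one_le_iff_ne_zero.1 hn⟩
  refine ⟨Pre ω (Nat.find hex), ⟨Nat.find_spec hex, ?_⟩, prefixOf_pre ω _⟩
  have hpos : 0 < Nat.find hex := (Nat.find_pos hex).2 (by simp [numPrefixes, Pre])
  rw [List.dropLast_eq_take, take_pre, length_pre, min_eq_left (Nat.sub_le _ _)]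
  exact not_not.1 (Nat.find_min hex (Nat.pred_lt hpos.ne'))

theorem tsum_measure_cyl_firstHit_le (μ : Measure (ℕ → Bool)) (x : ℕ → List Bool) :
    ∑' z : {z // FirstHit x z}, μ (Cyl z) ≤ μ (⋃ k, Cyl (x k)) := by
  have hdisj : Pairwise fun z w : {z // FirstHit x z} ↦ Disjoint (Cyl z) (Cyl w) :=
    fun z w hne ↦ Set.disjoint_left.2 fun _ hz hw ↦
      hne (Subtype.ext (z.2.eq_of_prefixOf w.2 hz hw))
  refine (tsum_meas_le_meas_iUnion_of_disjoint μ (As := fun z : {z // FirstHit x z} ↦ Cyl z)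
    (fun z ↦ measurableSet_cyl z) hdisj).trans
    (measure_mono (Set.iUnion_subset fun z ω hω ↦ Set.mem_iUnion.2 ?_))
  exact exists_prefixOf_of_numPrefixes_ne_zero hω z.2.1

end Counting

section Measure

theorem measure_setOf_le_tsum_indicator_le_div {Ω ι : Type*} [MeasurableSpace Ω] [Countable ι]
    (μ : Measure Ω) {s : ι → Set Ω} (hs : ∀ i, MeasurableSet (s i)) {K : ENNReal} (hK₀ : K ≠ 0)
    (hK : K ≠ ⊤) : μ {a | K ≤ ∑' i, (s i).indicator 1 a} ≤ (∑' i, μ (s i)) / K := by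
  have hmeas (i : ι) : Measurable ((s i).indicator (1 : Ω → ENNReal)) :=
    measurable_one.indicator (hs i)
  calc μ {a | K ≤ ∑' i, (s i).indicator 1 a}
      ≤ (∫⁻ a, ∑' i, (s i).indicator 1 a ∂μ) / K :=
        meas_ge_le_lintegral_div (Measurable.tsum hmeas).aemeasurable hK₀ hK
    _ = (∑' i, μ (s i)) / K := by
        rw [lintegral_tsum fun i ↦ (hmeas i).aemeasurable]
        simp only [lintegral_indicator_one (hs _)]

theorem measure_iUnion_cyl_numPrefixes_ge_le_div (μ : Measure (ℕ → Bool)) (x : ℕ → List Bool)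
    {K : ℕ} (hK : K ≠ 0) :
    μ (⋃ (z) (_ : K ≤ numPrefixes x z), Cyl z) ≤ (∑' k, μ (Cyl (x k))) / K := by
  refine (measure_mono (Set.iUnion₂_subset fun z hz ω hω ↦ ?_)).trans
    (measure_setOf_le_tsum_indicator_le_div μ (fun k ↦ measurableSet_cyl (x k))
      (Nat.cast_ne_zero.2 hK) (ENNReal.natCast_ne_top K))
  exact (Nat.cast_le.2 hz).trans (numPrefixes_le_tsum_indicator hω)

theorem tsum_two_inv_pow : ∑' n : ℕ, (2 : ENNReal)⁻¹ ^ n = 2 := by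
  rw [ENNReal.tsum_geometric, ENNReal.one_sub_inv_two, inv_inv]

theorem summable_two_zpow_neg_iff {ι : Type*} {l : ι → ℕ} :
    Summable (fun i ↦ (2 : ℝ) ^ (-(l i : ℤ))) ↔ ∑' i, (2 : ENNReal)⁻¹ ^ l i ≠ ⊤ := by
  have hcoe (i : ι) : (2 : ENNReal)⁻¹ ^ l i = ((2⁻¹ ^ l i : NNReal) : ENNReal) := by
    simp [ENNReal.inv_pow]
  simp_rw [hcoe]
  rw [ENNReal.tsum_coe_ne_top_iff_summable, ← NNReal.summable_coe]
  simp

end Measure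

section Tests

variable {α : Type*} {s : α → List Bool} {ω : ℕ → Bool}

theorem iUnion_cyl_paddedEnum_subset [Encodable α] (p : α → Prop) [DecidablePred p]
    (s : α → List Bool) (k : ℕ) :
    ⋃ m, Cyl (paddedEnum p s k m) ⊆
      Cyl (List.replicate k false) ∪ ⋃ (a) (_ : p a), Cyl (s a) := by
  refine Set.iUnion_subset fun m ↦ ?_
  by_cases hm : ∃ a, p a ∧ Encodable.encode a = m
  · obtain ⟨a, ha, rfl⟩ := hm
    rw [paddedEnum_encode k ha]
    exact (Set.subset_biUnion_of_mem (u := fun a ↦ Cyl (s a)) ha).trans Set.subset_union_right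
  · rw [paddedEnum_of_forall_encode_ne k fun a ha ham ↦ hm ⟨a, ha, ham⟩]
    exact Set.subset_union_left

theorem MLRandom.exists_forall_not_prefixOf [Primcodable α] {μ : Measure (ℕ → Bool)}
    (hω : MLRandom μ ω) (hμ : UniformMeasure μ) {p : ℕ → α → Prop} (hs : Computable s)
    (hp : ComputablePred fun q : ℕ × α ↦ p q.1 q.2)
    (hμp : ∀ n, μ (⋃ (a) (_ : p n a), Cyl (s a)) ≤ 2⁻¹ ^ n) :
    ∃ n, ∀ a, p n a → ¬PrefixOf (s a) ω := by
  classical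
  -- Row `n` uses `p (n + 1)`, so that half of the allowed measure is left for the padding.
  have hcomp : Computable₂ fun n i ↦ paddedEnum (p (n + 1)) s (n + 1) i := by
    have hsucc : Computable fun q : ℕ × ℕ ↦ q.1 + 1 := Computable.succ.comp Computable.fst
    exact computable_paddedEnum (hp.decide.comp ((hsucc.comp Computable.fst).pair Computable.snd))
      hs hsucc Computable.snd
  have hbound (n : ℕ) : μ (⋃ i, Cyl (paddedEnum (p (n + 1)) s (n + 1) i)) ≤ 2⁻¹ ^ n :=
    calc μ (⋃ i, Cyl (paddedEnum (p (n + 1)) s (n + 1) i))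
        ≤ μ (Cyl (List.replicate (n + 1) false)) + μ (⋃ (a) (_ : p (n + 1) a), Cyl (s a)) :=
          (measure_mono (iUnion_cyl_paddedEnum_subset _ s _)).trans (measure_union_le _ _)
      _ ≤ 2⁻¹ ^ (n + 1) + 2⁻¹ ^ (n + 1) :=
          add_le_add (by rw [hμ, List.length_replicate]) (hμp (n + 1))
      _ = 2⁻¹ ^ n := by rw [pow_succ, ← mul_add, ENNReal.inv_two_add_inv_two, mul_one]
  obtain ⟨n, hn⟩ := hω _ ⟨hcomp, hbound⟩
  refine ⟨n + 1, fun a ha hpre ↦ hn (Set.mem_iUnion.2 ⟨Encodable.encode a, ?_⟩)⟩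
  rwa [← paddedEnum_encode (s := s) (n + 1) ha] at hpre

theorem tsum_two_inv_pow_length_paddedEnum_le [Encodable α] (p : α → Prop) [DecidablePred p]
    (s : α → List Bool) : ∑' m, (2 : ENNReal)⁻¹ ^ (paddedEnum p s m m).length ≤
      2 + ∑' a : {a // p a}, 2⁻¹ ^ (s a).length := by
  let e (a : {a // p a}) : ℕ := Encodable.encode a.1
  have he : Function.Injective e := Encodable.encode_injective.comp Subtype.val_injective
  let w (a : {a // p a}) : ENNReal := 2⁻¹ ^ (s a).length
  have hle (m : ℕ) :
      2⁻¹ ^ (paddedEnum p s m m).length ≤ 2⁻¹ ^ m + Function.extend e w 0 m := by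
    by_cases hm : ∃ a, e a = m
    · obtain ⟨a, rfl⟩ := hm
      rw [paddedEnum_encode _ a.2, he.extend_apply]
      exact le_add_self
    · rw [paddedEnum_of_forall_encode_ne _ fun a ha ham ↦ hm ⟨⟨a, ha⟩, ham⟩, List.length_replicate]
      exact le_self_add
  refine (ENNReal.tsum_le_tsum hle).trans_eq ?_
  rw [ENNReal.tsum_add, tsum_two_inv_pow, tsum_extend_zero he]

theorem finite_prefixOf_of_forall_passesSolovay [Primcodable α] {p : α → Prop} (hs : Computable s)
    (hp : ComputablePred p) (hsum : ∑' a : {a // p a}, (2 : ENNReal)⁻¹ ^ (s a).length ≠ ⊤)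
    (hω : ∀ x, SolovayTest x → PassesSolovay x ω) : {a | p a ∧ PrefixOf (s a) ω}.Finite := by
  classical
  have hcomp : Computable fun m ↦ paddedEnum p s m m :=
    computable_paddedEnum (hp.decide.comp Computable.snd) hs Computable.id Computable.id
  have hpadsum : ∑' m, (2 : ENNReal)⁻¹ ^ (paddedEnum p s m m).length ≠ ⊤ :=
    ne_top_of_le_ne_top (ENNReal.add_ne_top.2 ⟨ENNReal.ofNat_ne_top, hsum⟩)
      (tsum_two_inv_pow_length_paddedEnum_le p s)
  have hfin : {m | PrefixOf (paddedEnum p s m m) ω}.Finite :=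
    hω _ ⟨hcomp, summable_two_zpow_neg_iff.2 hpadsum⟩
  refine (hfin.preimage Encodable.encode_injective.injOn).subset fun a ⟨ha, haω⟩ ↦ ?_
  rwa [← paddedEnum_encode (s := s) (Encodable.encode a) ha] at haω

theorem MLRandom.passesSolovay {μ : Measure (ℕ → Bool)} (hω : MLRandom μ ω)
    (hμ : UniformMeasure μ) {x : ℕ → List Bool} (hx : SolovayTest x) : PassesSolovay x ω := by
  by_contra hinf
  obtain ⟨N, hN⟩ := ENNReal.exists_nat_gt (summable_two_zpow_neg_iff.1 hx.2)
  obtain ⟨c, hc⟩ : ∃ c : ℕ, ∑' k, μ (Cyl (x k)) ≤ 2 ^ c := by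
    refine ⟨N, ?_⟩
    simp only [hμ _]
    exact hN.le.trans (mod_cast Nat.lt_two_pow_self.le)
  have hcomp : ComputablePred fun q : ℕ × List Bool ↦ 2 ^ (q.1 + c) ≤ numPrefixes x q.2 := by
    refine Computable.computablePred (Primrec.nat_le.decide.to_comp.comp ?_
      (computable_numPrefixes (hx.1.comp Computable.snd) Computable.snd))
    exact (primrec₂_nat_pow.comp (Primrec.const 2)
      (Primrec.nat_add.comp Primrec.fst (Primrec.const c))).to_comp
  have hbound (n : ℕ) : μ (⋃ (z) (_ : 2 ^ (n + c) ≤ numPrefixes x z), Cyl z) ≤ 2⁻¹ ^ n := by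
    refine (measure_iUnion_cyl_numPrefixes_ge_le_div μ x (by positivity)).trans
      (ENNReal.div_le_of_le_mul (hc.trans_eq ?_))
    push_cast
    rw [pow_add, ← mul_assoc, ← mul_pow, ENNReal.inv_mul_cancel two_ne_zero ENNReal.ofNat_ne_top,
      one_pow, one_mul]
  obtain ⟨n, hn⟩ := hω.exists_forall_not_prefixOf hμ Computable.id hcomp hbound
  obtain ⟨t, ht, htcard⟩ := Set.Infinite.exists_subset_card_eq hinf (2 ^ (n + c))
  obtain ⟨L, hL⟩ := exists_card_le_numPrefixes_pre t ht
  exact hn (Pre ω L) (htcard.symm.trans_le hL) (prefixOf_pre ω L)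

theorem tsum_firstHit_le_tsum_measure_effOpen {μ : Measure (ℕ → Bool)} (hμ : UniformMeasure μ)
    (f : ℕ → ℕ → List Bool) :
    ∑' q : {q : ℕ × List Bool // FirstHit (f q.1) q.2}, (2 : ENNReal)⁻¹ ^ q.1.2.length ≤
      ∑' n, μ (EffOpen f n) :=
  calc ∑' q : {q : ℕ × List Bool // FirstHit (f q.1) q.2}, (2 : ENNReal)⁻¹ ^ q.1.2.length
      = ∑' n, ∑' z : {z // FirstHit (f n) z}, μ (Cyl z) := by
        simp only [hμ _]
        rw [← ENNReal.tsum_sigma]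
        exact (Equiv.subtypeProdEquivSigmaSubtype fun n z ↦ FirstHit (f n) z).tsum_eq
          fun q ↦ (2 : ENNReal)⁻¹ ^ (q.2 : List Bool).length
    _ ≤ ∑' n, μ (EffOpen f n) :=
        ENNReal.tsum_le_tsum fun n ↦ tsum_measure_cyl_firstHit_le μ (f n)

end Tests

/-- `ω` is Martin-Löf random with respect to the uniform Bernoulli measure
iff it passes every Solovay test. -/
theorem ml_random_iff_passes_all_solovay_tests
    (μ : Measure (ℕ → Bool)) (hμ : UniformMeasure μ) [IsProbabilityMeasure μ]
    (ω : ℕ → Bool) :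
    MLRandom μ ω ↔ ∀ x : ℕ → List Bool, SolovayTest x → PassesSolovay x ω := by
  refine ⟨fun hω x hx ↦ hω.passesSolovay hμ hx, fun hω f hf ↦ ?_⟩
  by_contra! hmem
  have hhit (n : ℕ) : ∃ z, FirstHit (f n) z ∧ PrefixOf z ω :=
    (Set.mem_iUnion.1 (hmem n)).elim fun _ ↦ exists_firstHit_prefixOf
  choose z hz using hhit
  have hsum : ∑' q : {q : ℕ × List Bool // FirstHit (f q.1) q.2},
      (2 : ENNReal)⁻¹ ^ q.1.2.length ≤ 2 :=
    (tsum_firstHit_le_tsum_measure_effOpen hμ f).trans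
      ((ENNReal.tsum_le_tsum hf.2).trans_eq tsum_two_inv_pow)
  have hcomp : ComputablePred fun q : ℕ × List Bool ↦ FirstHit (f q.1) q.2 :=
    computablePred_firstHit (hf.1.comp (Computable.fst.comp Computable.fst) Computable.snd)
      Computable.snd
  have hfin : {q : ℕ × List Bool | FirstHit (f q.1) q.2 ∧ PrefixOf q.2 ω}.Finite :=
    finite_prefixOf_of_forall_passesSolovay Computable.snd hcomp
      (ne_top_of_le_ne_top ENNReal.ofNat_ne_top hsum) hω
  exact Set.infinite_of_injective_forall_mem (f := fun n ↦ (n, z n))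
    (fun _ _ h ↦ congrArg Prod.fst h) hz hfin
end

section
/- For every total Solovay test T there exists a computable unbounded nondecreasing function σ : ℕ → ℕ such that every infinite binary sequence ω satisfying Km(ω^n) ≥ n − σ(n) − O(1) for all n passes the test T. -/
open MeasureTheory Filter

/-!
The computable rate of convergence yields a computable unbounded `K` that increases so slowly,
by one only after the tail of `∑ 2 ^ (-|x n|)` has dropped by a further factor `8`, that
`∑ 4 ^ K n * 2 ^ (-|x n|)` still converges. By a Kraft–Chaitin code, `Km (x n) ≤ |x n| - 2 * K n`
up to an additive constant. Choose `σ` growing so slowly that `σ |x n| ≤ K n`. If `x n` is a prefix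
of `ω` and `Km (x n) ≥ |x n| - σ |x n| - c`, then `2 * K n ≤ K n + O(1)`, which bounds `K n`
and hence `n`.
-/

section Computability

theorem exists_computable_strictMono_ge {f : ℕ → ℕ} (hf : Computable f) :
    ∃ F : ℕ → ℕ, Computable F ∧ StrictMono F ∧ ∀ n, f n ≤ F n := by
  let F : ℕ → ℕ := Nat.rec (f 0) fun n r => r + f (n + 1) + 1
  have hF : ∀ n, F (n + 1) = F n + f (n + 1) + 1 := fun _ => rfl
  refine ⟨F, ?_, strictMono_nat_of_lt_succ fun n => by rw [hF]; omega, ?_⟩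
  · refine Computable.nat_rec (f := fun n : ℕ => n) (g := fun _ => f 0)
      (h := fun _ (p : ℕ × ℕ) => p.2 + f (p.1 + 1) + 1) Computable.id (Computable.const _) ?_
    have hr : Computable fun q : ℕ × ℕ × ℕ => q.2.2 := Computable.snd.comp Computable.snd
    have hn : Computable fun q : ℕ × ℕ × ℕ => q.2.1 := Computable.fst.comp Computable.snd
    exact Computable.succ.comp
      (Primrec.nat_add.to_comp.comp hr (hf.comp (Computable.succ.comp hn)))
  · rintro (_ | n)
    · exact le_rfl
    · rw [hF]; omega

theorem exists_computable_lt_iff_le {M : ℕ → ℕ} (hM : Computable M) (hmono : Monotone M)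
    (htop : Tendsto M atTop atTop) :
    ∃ K : ℕ → ℕ, Computable K ∧ ∀ k n, k < K n ↔ M k ≤ n := by
  have hex : ∀ n, ∃ k, n < M k := fun n => (htop.eventually_gt_atTop n).exists
  have hlt : ComputablePred fun q : ℕ × ℕ => q.1 < M q.2 :=
    (Primrec.nat_lt.decide.to_comp.comp Computable.fst
      (hM.comp Computable.snd)).computablePred
  refine ⟨fun n => Nat.find (hex n), Computable.find hlt hex, fun k n => ?_⟩
  simp only [Nat.lt_find_iff, not_lt]
  exact ⟨fun h => h k le_rfl, fun h _ hj => (hmono hj).trans h⟩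

theorem computable_const_pow (b : ℕ) : Computable fun n : ℕ => b ^ n :=
  (Primrec₂.unpaired'.1 Nat.Primrec.pow).to_comp.comp (Computable.const b) Computable.id

theorem exists_computable_num_den_sum_inv {d : ℕ → ℕ} (hd : Computable d) (hpos : ∀ n, 0 < d n) :
    ∃ num den : ℕ → ℕ, Computable num ∧ Computable den ∧ (∀ n, 0 < den n) ∧
      ∀ n, ∑ j ∈ Finset.range n, (d j : ℝ)⁻¹ = num n / den n := by
  let R : ℕ → ℕ × ℕ := Nat.rec (0, 1) fun n r => (r.1 * d n + r.2, r.2 * d n)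
  have hR : ∀ n, R (n + 1) = ((R n).1 * d n + (R n).2, (R n).2 * d n) := fun _ => rfl
  have hRc : Computable R := by
    refine Computable.nat_rec (f := fun n : ℕ => n) (g := fun _ => ((0, 1) : ℕ × ℕ))
      (h := fun _ (p : ℕ × ℕ × ℕ) => (p.2.1 * d p.1 + p.2.2, p.2.2 * d p.1))
      Computable.id (Computable.const _) ?_
    have hdn : Computable fun q : ℕ × ℕ × ℕ × ℕ => d q.2.1 :=
      hd.comp (Computable.fst.comp Computable.snd)
    have hr : Computable fun q : ℕ × ℕ × ℕ × ℕ => q.2.2 := Computable.snd.comp Computable.snd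
    have hmul := Primrec.nat_mul.to_comp
    exact (Primrec.nat_add.to_comp.comp (hmul.comp (Computable.fst.comp hr) hdn)
      (Computable.snd.comp hr)).pair (hmul.comp (Computable.snd.comp hr) hdn)
  have hden : ∀ n, 0 < (R n).2 := fun n => by
    induction n with
    | zero => exact one_pos
    | succ n ih => rw [hR]; exact Nat.mul_pos ih (hpos n)
  refine ⟨_, _, Computable.fst.comp hRc, Computable.snd.comp hRc, hden, fun n => ?_⟩
  induction n with
  | zero => simp [R]
  | succ n ih =>
    have hdn : (d n : ℝ) ≠ 0 := mod_cast (hpos n).ne'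
    have hRn : ((R n).2 : ℝ) ≠ 0 := mod_cast (hden n).ne'
    rw [Finset.sum_range_succ, ih, hR]
    push_cast
    field_simp

-- `Denumerable.ofEncodableOfInfinite` renumbers the codes of `α` increasingly, without gaps.
theorem encode_ofEncodableOfInfinite_le {α : Type*} [Encodable α] [Infinite α] (a : α) :
    (Denumerable.ofEncodableOfInfinite α).toEncodable.encode a ≤ Encodable.encode a := by
  change List.countP (fun n => @decide (n ∈ Set.range (Encodable.encode (α := α)))
    (Encodable.decidableRangeEncode α n)) (List.range (Encodable.encode a)) ≤ _
  exact List.countP_le_length.trans_eq List.length_range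

theorem encode_rat_inv_natCast_le {n : ℕ} (hn : 0 < n) :
    Rat.instDenumerable.toEncodable.encode (n : ℚ)⁻¹ ≤ Nat.pair 2 n := by
  have hcode : Rat.instEncodable.encode (n : ℚ)⁻¹ =
      Nat.pair (Encodable.encode (n : ℚ)⁻¹.num) (n : ℚ)⁻¹.den := rfl
  rw [Rat.inv_natCast_num_of_pos hn, Rat.inv_natCast_den_of_pos hn] at hcode
  exact (encode_ofEncodableOfInfinite_le _).trans_eq hcode

end Computability

section Summability

theorem summable_pow_mul_of_summable_tail {ι : Type*} {w : ι → ℝ} (hw₀ : ∀ i, 0 ≤ w i)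
    (hw : Summable w) {K : ι → ℕ} {b : ℝ} (hb : 0 ≤ b)
    (htail : Summable fun k => b ^ k * ∑' i, {i | k < K i}.indicator w i) :
    Summable fun i => b ^ K i * w i := by
  have hlayer : Summable fun q : ℕ × ι => b ^ q.1 * {i | q.1 < K i}.indicator w q.2 := by
    refine (summable_prod_of_nonneg fun q => mul_nonneg (pow_nonneg hb _)
      (Set.indicator_nonneg (fun i _ => hw₀ i) _)).2 ⟨fun k => ?_, ?_⟩
    · exact (hw.indicator {i | k < K i}).mul_left (b ^ k)
    · simpa only [tsum_mul_left] using htail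
  have hsum_layers : ∀ i, ∑' k, b ^ k * {i | k < K i}.indicator w i =
      (∑ k ∈ Finset.range (K i), b ^ k) * w i := by
    intro i
    rw [tsum_eq_sum (s := Finset.range (K i)), Finset.sum_mul]
    · refine Finset.sum_congr rfl fun k hk => ?_
      rw [Set.indicator_of_mem (s := {i | k < K i}) (Finset.mem_range.1 hk)]
    · intro k hk
      have hki : i ∉ {i | k < K i} := fun h => hk (Finset.mem_range.2 h)
      rw [Set.indicator_of_notMem hki, mul_zero]
  have hgeom : Summable fun i => (∑ k ∈ Finset.range (K i), b ^ k) * w i :=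
    hlayer.prod_symm.prod.congr hsum_layers
  refine ((hgeom.mul_left (b - 1)).add hw).congr fun i => ?_
  rw [← mul_assoc, mul_geom_sum]
  ring

theorem summable_pow_mul_of_tail_le {w : ℕ → ℝ} (hw₀ : ∀ n, 0 ≤ w n) (hw : Summable w)
    {M K : ℕ → ℕ} (hK : ∀ k n, k < K n ↔ M k ≤ n) {b c : ℝ} (hb : 0 ≤ b) (hbc : b < c)
    (htail : ∀ k, ∑' n : {n // M k ≤ n}, w n ≤ (c ^ k)⁻¹) :
    Summable fun n => b ^ K n * w n := by
  have hc : 0 < c := hb.trans_lt hbc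
  refine summable_pow_mul_of_summable_tail hw₀ hw hb ?_
  have hgeom : Summable fun k => (b / c) ^ k :=
    summable_geometric_of_lt_one (div_nonneg hb hc.le) ((div_lt_one hc).2 hbc)
  refine hgeom.of_nonneg_of_le (fun k => mul_nonneg (pow_nonneg hb k)
    (tsum_nonneg fun n => Set.indicator_nonneg (fun n _ => hw₀ n) n)) fun k => ?_
  rw [div_pow, div_eq_mul_inv]
  simp only [hK, ← tsum_subtype]
  exact mul_le_mul_of_nonneg_left (htail k) (pow_nonneg hb k)

end Summability

section DyadicIntervals

/-- The natural number with binary expansion `p`, most significant bit first. -/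
def binVal (p : List Bool) : ℕ := p.foldl (fun v b => 2 * v + b.toNat) 0

theorem binVal_append_singleton (p : List Bool) (b : Bool) :
    binVal (p ++ [b]) = 2 * binVal p + b.toNat := by
  simp only [binVal, List.foldl_append, List.foldl_cons, List.foldl_nil]

theorem computable_binVal : Computable binVal := by
  refine (Primrec.list_foldl (f := fun p : List Bool => p) (g := fun _ => 0)
    (h := fun _ (q : ℕ × Bool) => 2 * q.1 + q.2.toNat) Primrec.id (Primrec.const 0) ?_).to_comp
  exact Primrec.nat_add.comp (Primrec.nat_double.comp (Primrec.fst.comp Primrec.snd))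
    ((Primrec.dom_bool Bool.toNat).comp (Primrec.snd.comp Primrec.snd))

theorem exists_length_eq_binVal_eq {L a : ℕ} (ha : a < 2 ^ L) :
    ∃ p : List Bool, p.length = L ∧ binVal p = a := by
  induction L generalizing a with
  | zero => exact ⟨[], rfl, (Nat.lt_one_iff.1 ha).symm⟩
  | succ L ih =>
    obtain ⟨p, rfl, hp⟩ := ih (a := a / 2) (by rw [pow_succ] at ha; omega)
    refine ⟨p ++ [a.bodd], by simp, ?_⟩
    rw [binVal_append_singleton, hp, ← Nat.mod_two_of_bodd, Nat.div_add_mod]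

/-- The half-open interval of reals in `[0, 1)` having a binary expansion that starts with `p`. -/
def dyadicInterval (p : List Bool) : Set ℝ :=
  Set.Ico (binVal p / 2 ^ p.length) ((binVal p + 1) / 2 ^ p.length)

theorem dyadicInterval_nonempty (p : List Bool) : (dyadicInterval p).Nonempty :=
  Set.nonempty_Ico.2 (by gcongr; exact lt_add_one _)

theorem dyadicInterval_append_singleton_subset (p : List Bool) (b : Bool) :
    dyadicInterval (p ++ [b]) ⊆ dyadicInterval p := by
  have hb : (b.toNat : ℝ) ≤ 1 := mod_cast b.toNat_le
  simp only [dyadicInterval, binVal_append_singleton, List.length_append, List.length_singleton,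
    pow_succ]
  push_cast
  refine Set.Ico_subset_Ico ?_ ?_ <;> rw [div_le_div_iff₀ (by positivity) (by positivity)]
  · nlinarith [pow_pos (two_pos (α := ℝ)) p.length, b.toNat.cast_nonneg (α := ℝ)]
  · nlinarith [pow_pos (two_pos (α := ℝ)) p.length]

theorem dyadicInterval_antitone {p q : List Bool} (h : p <+: q) :
    dyadicInterval q ⊆ dyadicInterval p := by
  obtain ⟨r, rfl⟩ := h
  induction r using List.reverseRecOn with
  | nil => rw [List.append_nil]
  | append_singleton r b ih =>
    rw [← List.append_assoc]
    exact (dyadicInterval_append_singleton_subset _ b).trans ih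

theorem exists_dyadicInterval_subset_Ico {a b : ℝ} {L : ℕ} (ha : 0 ≤ a) (hb : b ≤ 1)
    (hab : a + 2 / 2 ^ L ≤ b) :
    ∃ p : List Bool, p.length = L ∧ dyadicInterval p ⊆ Set.Ico a b := by
  have hL : (0 : ℝ) < 2 ^ L := by positivity
  have hlo : a * 2 ^ L ≤ ⌈a * 2 ^ L⌉₊ := Nat.le_ceil _
  have hhi : (⌈a * 2 ^ L⌉₊ : ℝ) + 1 < b * 2 ^ L := by
    calc (⌈a * 2 ^ L⌉₊ : ℝ) + 1 < a * 2 ^ L + 1 + 1 := by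
          gcongr; exact Nat.ceil_lt_add_one (by positivity)
      _ = (a + 2 / 2 ^ L) * 2 ^ L := by field_simp; ring
      _ ≤ b * 2 ^ L := by gcongr
  have hlt : ⌈a * 2 ^ L⌉₊ < 2 ^ L := by
    have : (⌈a * 2 ^ L⌉₊ : ℝ) < 2 ^ L := by nlinarith
    exact_mod_cast this
  obtain ⟨p, rfl, hp⟩ := exists_length_eq_binVal_eq hlt
  refine ⟨p, rfl, Set.Ico_subset_Ico ?_ ?_⟩
  · rwa [hp, le_div_iff₀ hL]
  · rw [hp, div_le_iff₀ hL]
    exact hhi.le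

theorem dyadicInterval_subset_Ico_div_iff {p : List Bool} {a b c d : ℕ} (hb : 0 < b) (hd : 0 < d) :
    dyadicInterval p ⊆ Set.Ico (a / b : ℝ) (c / d) ↔
      a * 2 ^ p.length ≤ binVal p * b ∧ (binVal p + 1) * d ≤ c * 2 ^ p.length := by
  have hb' : (0 : ℝ) < b := mod_cast hb
  have hd' : (0 : ℝ) < d := mod_cast hd
  rw [dyadicInterval, Set.Ico_subset_Ico_iff (Set.nonempty_Ico.1 (dyadicInterval_nonempty p)),
    div_le_div_iff₀ hb' (by positivity), div_le_div_iff₀ (by positivity) hd']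
  norm_cast

theorem computablePred_dyadicInterval_subset_Ico {num den : ℕ → ℕ} (hnum : Computable num)
    (hden : Computable den) (hpos : ∀ n, 0 < den n) :
    ComputablePred fun q : List Bool × ℕ =>
      dyadicInterval q.1 ⊆
        Set.Ico (num q.2 / den q.2 : ℝ) (num (q.2 + 1) / den (q.2 + 1)) := by
  have hle : Computable₂ fun a b : ℕ => decide (a ≤ b) := Primrec.nat_le.decide.to_comp
  have hmul : Computable₂ fun a b : ℕ => a * b := Primrec.nat_mul.to_comp
  have hval : Computable fun q : List Bool × ℕ => binVal q.1 := computable_binVal.comp .fst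
  have hpow : Computable fun q : List Bool × ℕ => 2 ^ q.1.length :=
    (computable_const_pow 2).comp (Computable.list_length.comp .fst)
  have hsucc : Computable fun q : List Bool × ℕ => q.2 + 1 := Computable.succ.comp .snd
  have htest := Primrec.and.to_comp.comp
    (hle.comp (hmul.comp (hnum.comp .snd) hpow) (hmul.comp hval (hden.comp .snd)))
    (hle.comp (hmul.comp (Computable.succ.comp hval) (hden.comp hsucc))
      (hmul.comp (hnum.comp hsucc) hpow))
  refine ComputablePred.computable_iff.2 ⟨_, htest, funext fun q => propext ?_⟩
  rw [dyadicInterval_subset_Ico_div_iff (hpos _) (hpos _), Bool.and_eq_true, decide_eq_true_iff,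
    decide_eq_true_iff]

end DyadicIntervals

section Complexity

theorem IsKm.exists_le_length_add {Km : List Bool → ℕ} (hKm : IsKm Km) {y : ℕ → List Bool}
    (hy : Computable y) {Codes : List Bool → ℕ → Prop}
    (hCodes : ComputablePred fun q : List Bool × ℕ => Codes q.1 q.2)
    (huniq : ∀ p p' n n', p <+: p' → Codes p n → Codes p' n' → n = n') :
    ∃ c, ∀ p n, Codes p n → Km (y n) ≤ p.length + c := by
  classical
  let ψ : List Bool →. List Bool := fun p =>
    (Nat.rfind fun n => Part.some (decide (Codes p n))).map y
  have mem_ψ : ∀ p z, z ∈ ψ p ↔ ∃ n, Codes p n ∧ y n = z := by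
    intro p z
    simp only [ψ, Part.mem_map_iff]
    constructor
    · rintro ⟨n, hn, rfl⟩
      exact ⟨n, of_decide_eq_true (Part.mem_some_iff.1 (Nat.rfind_spec hn)).symm, rfl⟩
    · rintro ⟨n, hn, rfl⟩
      refine ⟨n, Nat.mem_rfind.2 ⟨Part.mem_some_iff.2 (decide_eq_true hn).symm, fun {m} hm => ?_⟩,
        rfl⟩
      exact Part.mem_some_iff.2
        (decide_eq_false fun h => hm.ne (huniq p p m n List.prefix_rfl h hn)).symm
  have hψ : MonotoneMachine ψ := by
    refine ⟨(Partrec.rfind (p := fun p n => Part.some (decide (Codes p n)))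
      hCodes.decide.partrec).map (hy.comp .snd), ?_⟩
    intro p p' z z' hz hz' hpp'
    obtain ⟨n, hn, rfl⟩ := (mem_ψ p z).1 hz
    obtain ⟨n', hn', rfl⟩ := (mem_ψ p' z').1 hz'
    rw [huniq p p' n n' hpp' hn hn']
    exact Or.inl (List.prefix_refl _)
  obtain ⟨-, -, -, -, hopt⟩ := hKm
  obtain ⟨c, hc⟩ := hopt ψ hψ
  exact ⟨c, fun p n hp => hc (y n) p (y n) ((mem_ψ p _).2 ⟨n, hp, rfl⟩) (List.prefix_refl _)⟩

-- The `n`-th string is coded by the dyadic intervals inside the `n`-th of the consecutive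
-- intervals of lengths `2 ^ (-ℓ n)` packed into `[0, 1)`.
theorem IsKm.exists_le_add_of_tsum_le_one {Km : List Bool → ℕ} (hKm : IsKm Km)
    {y : ℕ → List Bool} (hy : Computable y) {ℓ : ℕ → ℕ} (hℓ : Computable ℓ)
    (hsum : Summable fun n => ((2 : ℝ) ^ ℓ n)⁻¹) (hle : ∑' n, ((2 : ℝ) ^ ℓ n)⁻¹ ≤ 1) :
    ∃ c, ∀ n, Km (y n) ≤ ℓ n + c := by
  let S : ℕ → ℝ := fun n => ∑ j ∈ Finset.range n, ((2 : ℝ) ^ ℓ j)⁻¹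
  have hS_succ : ∀ n, S (n + 1) = S n + ((2 : ℝ) ^ ℓ n)⁻¹ := fun n => Finset.sum_range_succ _ n
  have hS_mono : Monotone S := monotone_nat_of_le_succ fun n => by
    rw [hS_succ]; exact le_add_of_nonneg_right (by positivity)
  have hS_le : ∀ n, S n ≤ 1 := fun n =>
    (hsum.sum_le_tsum _ fun _ _ => by positivity).trans hle
  obtain ⟨num, den, hnum, hden, hpos, hfrac⟩ := exists_computable_num_den_sum_inv
    ((computable_const_pow 2).comp hℓ) fun _ => by positivity
  have hS_frac : ∀ n, S n = num n / den n := by simpa [S] using hfrac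
  obtain ⟨c, hc⟩ := hKm.exists_le_length_add hy
    (Codes := fun p n => dyadicInterval p ⊆ Set.Ico (S n) (S (n + 1)))
    (by simpa only [hS_frac] using computablePred_dyadicInterval_subset_Ico hnum hden hpos)
    (by
      intro p p' n n' hpp' hn hn'
      by_contra hne
      obtain ⟨r, hr⟩ := dyadicInterval_nonempty p'
      exact Set.disjoint_left.1 (hS_mono.pairwise_disjoint_on_Ico_succ hne)
        (hn (dyadicInterval_antitone hpp' hr)) (hn' hr))
  refine ⟨c + 1, fun n => ?_⟩
  obtain ⟨p, hp_length, hp⟩ := exists_dyadicInterval_subset_Ico (a := S n) (b := S (n + 1))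
    (L := ℓ n + 1) (Finset.sum_nonneg fun _ _ => by positivity) (hS_le _)
    (by rw [hS_succ, pow_succ]; field_simp; rfl)
  have := hc p n hp
  omega

theorem IsKm.exists_le_add_of_summable {Km : List Bool → ℕ} (hKm : IsKm Km)
    {y : ℕ → List Bool} (hy : Computable y) {ℓ : ℕ → ℕ} (hℓ : Computable ℓ)
    (hsum : Summable fun n => ((2 : ℝ) ^ ℓ n)⁻¹) : ∃ c, ∀ n, Km (y n) ≤ ℓ n + c := by
  obtain ⟨C, hC⟩ := pow_unbounded_of_one_lt (∑' n, ((2 : ℝ) ^ ℓ n)⁻¹) one_lt_two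
  obtain ⟨c, hc⟩ := hKm.exists_le_add_of_tsum_le_one hy (ℓ := fun n => ℓ n + C)
    (Primrec.nat_add.to_comp.comp hℓ (Computable.const C))
    (by simpa only [pow_add, mul_inv] using hsum.mul_right _)
    (by
      simp only [pow_add, mul_inv, tsum_mul_right]
      exact mul_inv_le_one_of_le₀ hC.le (by positivity))
  exact ⟨C + c, fun n => (hc n).trans_eq (add_assoc _ _ _)⟩

theorem IsKm.exists_add_le_length_add {Km : List Bool → ℕ} (hKm : IsKm Km) {x : ℕ → List Bool}
    (hx : Computable x) {d : ℕ → ℕ} (hd : Computable d)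
    (hsum : Summable fun n => (2 : ℝ) ^ d n * 2 ^ (-((x n).length : ℤ))) :
    ∃ c, ∀ n, Km (x n) + d n ≤ (x n).length + c := by
  simp only [zpow_neg, zpow_natCast, ← div_eq_mul_inv] at hsum
  obtain ⟨C, hC⟩ := pow_unbounded_of_one_lt (∑' n, (2 : ℝ) ^ d n / 2 ^ (x n).length) one_lt_two
  have hd_le : ∀ n, d n ≤ (x n).length + C := by
    intro n
    have h : (2 : ℝ) ^ d n / 2 ^ (x n).length ≤ 2 ^ C :=
      (hsum.le_tsum n fun _ _ => by positivity).trans hC.le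
    rw [div_le_iff₀' (by positivity), ← pow_add] at h
    exact (pow_le_pow_iff_right₀ one_lt_two).1 h
  have hsum' : Summable fun n => ((2 : ℝ) ^ ((x n).length - d n))⁻¹ := by
    refine hsum.of_nonneg_of_le (fun _ => by positivity) fun n => ?_
    rw [le_div_iff₀ (by positivity), inv_mul_le_iff₀ (by positivity), ← pow_add]
    exact pow_le_pow_right₀ one_le_two (by omega)
  obtain ⟨c, hc⟩ := hKm.exists_le_add_of_summable hx
    (Primrec.nat_sub.to_comp.comp (Computable.list_length.comp hx) hd) hsum'
  refine ⟨C + c, fun n => ?_⟩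
  have := hc n
  have := hd_le n
  omega

end Complexity

section SolovayTests

-- The moduli of `b⁻ᵏ` are not evaluated but majorized, using only a bound on the code of `b⁻ᵏ`.
theorem TotalSolovayTest.exists_tail_le {x : ℕ → List Bool} (hx : TotalSolovayTest x) {b : ℕ}
    (hb : 1 < b) :
    ∃ M : ℕ → ℕ, Computable M ∧ StrictMono M ∧ ∀ k,
      ∑' n : {n // M k ≤ n}, (2 : ℝ) ^ (-((x n).length : ℤ)) ≤ ((b : ℝ) ^ k)⁻¹ := by
  obtain ⟨⟨-, hsum⟩, m, hm, htail⟩ := hx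
  obtain ⟨F, hF, hF_mono, hF_ge⟩ :=
    exists_computable_strictMono_ge (hm.comp (Computable.ofNat ℚ))
  have hM : Computable fun k => F (Nat.pair 2 (b ^ k)) :=
    hF.comp (Primrec₂.natPair.to_comp.comp (Computable.const 2) (computable_const_pow b))
  refine ⟨_, hM, fun i j hij => hF_mono (Nat.pair_lt_pair_right 2 (pow_lt_pow_right₀ hb hij)),
    fun k => ?_⟩
  have hbk : 0 < b ^ k := by positivity
  set δ : ℚ := ((b ^ k : ℕ) : ℚ)⁻¹ with hδ
  have hmδ : m δ ≤ F (Nat.pair 2 (b ^ k)) := by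
    simpa only [Denumerable.ofNat_encode] using
      (hF_ge (Rat.instDenumerable.toEncodable.encode δ)).trans
        (hF_mono.monotone (encode_rat_inv_natCast_le hbk))
  calc ∑' n : {n // F (Nat.pair 2 (b ^ k)) ≤ n}, (2 : ℝ) ^ (-((x n).length : ℤ))
      ≤ ∑' n : {n // m δ ≤ n}, (2 : ℝ) ^ (-((x n).length : ℤ)) :=
        (hsum.subtype _).tsum_le_tsum_of_inj (Subtype.impEmbedding _ _ fun _ => hmδ.trans)
          (Subtype.impEmbedding _ _ _).injective (fun _ _ => by positivity) (fun _ => le_rfl)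
          (hsum.subtype _)
    _ ≤ δ := htail δ (by positivity)
    _ = ((b : ℝ) ^ k)⁻¹ := by push_cast [hδ]; rfl

theorem PrefixOf.pre_length {x : List Bool} {ω : ℕ → Bool} (h : PrefixOf x ω) :
    Pre ω x.length = x := by
  refine List.ext_getElem (by simp [Pre]) fun i _ hi => ?_
  simpa only [Pre, List.getElem_map, List.getElem_range, List.get_eq_getElem] using h ⟨i, hi⟩

end SolovayTests

/-- for every total Solovay test there is a computable unbounded
nondecreasing function `σ` such that every sequence `ω` with
`Km (ω^n) ≥ n - σ n - O(1)` passes the test. -/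
theorem total_solovay_test_stability
    (Km : List Bool → ℕ) (hKm : IsKm Km)
    (x : ℕ → List Bool) (hx : TotalSolovayTest x) :
    ∃ σ : ℕ → ℕ, Computable σ ∧ Monotone σ ∧ (∀ k : ℕ, ∃ n, k ≤ σ n) ∧
      ∀ ω : ℕ → Bool,
        (∃ c : ℕ, ∀ n : ℕ, (n : ℤ) - σ n - c ≤ (Km (Pre ω n) : ℤ)) →
        PassesSolovay x ω := by
  obtain ⟨M, hM, hM_mono, htail⟩ := hx.exists_tail_le (b := 8) (by norm_num)
  obtain ⟨F, hF, hF_mono, hF_ge⟩ :=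
    exists_computable_strictMono_ge (Computable.list_length.comp hx.1.1)
  obtain ⟨K, hK, hK_iff⟩ := exists_computable_lt_iff_le hM hM_mono.monotone hM_mono.tendsto_atTop
  have hFM := hF_mono.comp hM_mono
  obtain ⟨σ, hσ, hσ_iff⟩ :=
    exists_computable_lt_iff_le (hF.comp hM) hFM.monotone hFM.tendsto_atTop
  have hσK : ∀ n, σ (x n).length ≤ K n := fun n => le_of_forall_lt fun k hk =>
    (hK_iff k n).2 (hF_mono.le_iff_le.1 (((hσ_iff k _).1 hk).trans (hF_ge n)))
  obtain ⟨d, hd⟩ : ∃ d, ∀ n, Km (x n) + 2 * K n ≤ (x n).length + d :=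
    hKm.exists_add_le_length_add hx.1.1 (Primrec.nat_double.to_comp.comp hK) <| by
      simpa only [pow_mul] using summable_pow_mul_of_tail_le (b := 2 ^ 2)
        (fun n => by positivity) hx.1.2 hK_iff (by norm_num) (by norm_num) htail
  refine ⟨σ, hσ, fun i j hij => le_of_forall_lt fun k hk =>
    (hσ_iff k j).2 (((hσ_iff k i).1 hk).trans hij), fun k => ⟨_, ((hσ_iff k _).2 le_rfl).le⟩, ?_⟩
  rintro ω ⟨c, hc⟩
  refine (Set.finite_Iio (M (c + d))).subset fun n (hn : PrefixOf (x n) ω) => ?_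
  have hKm_ge := hc (x n).length
  rw [hn.pre_length] at hKm_ge
  have hK_le : ¬ c + d < K n := by have := hd n; have := hσK n; omega
  simpa only [Set.mem_Iio, hK_iff, not_le] using hK_le
end
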